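/- Let d ≥ 1, μ > −1, n ≥ 0, and let f be a polynomial in d variables of total degree at most n. Then ‖𝒟_μ f‖_{μ,2} ≤ n(n+2μ+d) ‖f‖_{μ,2}. -/

import Mathlib

/-!
The operator `𝒟_μ` is symmetric for the inner product `L(f g)`, `L(h) = ∫_{B^d} h W_μ`, and on
polynomials of degree at most `n` it is diagonalizable with eigenvalues `-λ_k`,
`λ_k = k (k + 2μ + d)`, `0 ≤ k ≤ n`. Since `0 = λ_0 < λ_1 < ⋯ < λ_n`, Parseval's identity
(`Llin_parseval`) gives the bound with constant `λ_n`.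

*Diagonalization* (`exists_eigen_decomp`). On forms of degree `a` Euler's identity gives
`𝒟_μ = Δ - λ_a` (`Dlin_homog`), so `𝒟_μ + λ_{n+1}` maps polynomials of degree `≤ n + 1` to
polynomials of degree `≤ n`; as the `λ_k` are distinct, an induction on `n` yields eigenvectors.

*Symmetry* (`Llin_symm`). Boundary terms are avoided by comparing `L` with the Gaussian functional
`G(h) = ∫ h e^{-‖x‖²}` over all of `ℝ^d`. For a form `h` of degree `a`, evaluating
`∬ h(y) e^{-s} (s - ‖y‖²)_+^μ dy ds` in both orders gives
`Γ(μ + 1 + (a + d)/2) L(h) = Γ(μ + 1) G(h)` (`Llin_homog`); the same Fubini argument shows that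
polynomials are integrable against `W_μ` for `μ > -1`. Under this dictionary and the recursion of
`Γ`, symmetry for forms `f`, `g` of degrees `a`, `b` becomes
`G(g Δf) - G(f Δg) = 2 (a - b) G(f g)`, which is integration by parts against `e^{-‖x‖²}`
(`Glin_green`).
-/

open MeasureTheory Real MvPolynomial Finset
open scoped ENNReal

noncomputable section

/-- The Euclidean norm of `x ∈ ℝ^d`. -/
def eunorm {d : ℕ} (x : Fin d → ℝ) : ℝ := Real.sqrt (∑ i, (x i) ^ 2)

/-- The closed unit ball `B^d = {x : ‖x‖ ≤ 1}` in `ℝ^d` (Euclidean norm). -/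
def Bd (d : ℕ) : Set (Fin d → ℝ) := {x | eunorm x ≤ 1}

/-- The metric `d_B(x,y) = arccos(⟨x,y⟩ + √(1-‖x‖²)√(1-‖y‖²))` on the unit ball. -/
def distB {d : ℕ} (x y : Fin d → ℝ) : ℝ :=
  Real.arccos ((∑ i, x i * y i) +
    Real.sqrt (1 - eunorm x ^ 2) * Real.sqrt (1 - eunorm y ^ 2))

/-- The metric ball `{y ∈ B^d : d_B(x,y) < r}`. -/
def ballB {d : ℕ} (x : Fin d → ℝ) (r : ℝ) : Set (Fin d → ℝ) :=
  {y | y ∈ Bd d ∧ distB x y < r}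

/-- `W` is a doubling weight on the unit ball `B^d` with respect to the metric `d_B`. -/
def IsDoublingBall (d : ℕ) (W : (Fin d → ℝ) → ℝ) : Prop :=
  ∃ L > (0 : ℝ), ∀ x ∈ Bd d, ∀ r : ℝ, 0 < r →
    ∫ y in ballB x (2 * r), W y ≤ L * ∫ y in ballB x r, W y

/-- The standard simplex `Δ^d = {x : x_i ≥ 0, x_1 + ⋯ + x_d ≤ 1}`. -/
def Td (d : ℕ) : Set (Fin d → ℝ) := {x | (∀ i, 0 ≤ x i) ∧ ∑ i, x i ≤ 1}

/-- The metric `d_Δ(x,y) = arccos(Σ √(x_i y_i) + √((1-|x|)(1-|y|)))` on the simplex. -/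
def distT {d : ℕ} (x y : Fin d → ℝ) : ℝ :=
  Real.arccos ((∑ i, Real.sqrt (x i * y i)) +
    Real.sqrt ((1 - ∑ i, x i) * (1 - ∑ i, y i)))

/-- The metric ball `{y ∈ Δ^d : d_Δ(x,y) < r}`. -/
def ballT {d : ℕ} (x : Fin d → ℝ) (r : ℝ) : Set (Fin d → ℝ) :=
  {y | y ∈ Td d ∧ distT x y < r}

/-- `W` is a doubling weight on the simplex `Δ^d` with respect to the metric `d_Δ`. -/
def IsDoublingSimplex (d : ℕ) (W : (Fin d → ℝ) → ℝ) : Prop :=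
  ∃ L > (0 : ℝ), ∀ x ∈ Td d, ∀ r : ℝ, 0 < r →
    ∫ y in ballT x (2 * r), W y ≤ L * ∫ y in ballT x r, W y

/-- Weighted `L^p` norm on the unit ball: for `p < ∞` it is
`(∫_{B^d} |f|^p W)^{1/p}`, and for `p = ∞` the sup norm on `B^d`. -/
def lpNormB (d : ℕ) (W : (Fin d → ℝ) → ℝ) (p : ℝ≥0∞) (f : (Fin d → ℝ) → ℝ) : ℝ :=
  if p = ⊤ then ⨆ x : Bd d, |f x.1|
  else (∫ x in Bd d, |f x| ^ p.toReal * W x) ^ (1 / p.toReal)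

/-- Weighted `L^p` norm on the simplex: for `p < ∞` it is
`(∫_{Δ^d} |f|^p W)^{1/p}`, and for `p = ∞` the sup norm on `Δ^d`. -/
def lpNormT (d : ℕ) (W : (Fin d → ℝ) → ℝ) (p : ℝ≥0∞) (f : (Fin d → ℝ) → ℝ) : ℝ :=
  if p = ⊤ then ⨆ x : Td d, |f x.1|
  else (∫ x in Td d, |f x| ^ p.toReal * W x) ^ (1 / p.toReal)

/-- Evaluation of a real polynomial in `d` variables at a point of `ℝ^d`. -/
def evalP {d : ℕ} (f : MvPolynomial (Fin d) ℝ) (x : Fin d → ℝ) : ℝ :=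
  MvPolynomial.eval x f

/-- The angular derivative `D_{i,j} = x_i ∂_j − x_j ∂_i` acting on polynomials. -/
def Dpoly {d : ℕ} (i j : Fin d) (f : MvPolynomial (Fin d) ℝ) : MvPolynomial (Fin d) ℝ :=
  X i * pderiv j f - X j * pderiv i f

/-- The classical weight `W_μ(x) = (1−‖x‖²)^μ` on the unit ball. -/
def Wmu (d : ℕ) (μ : ℝ) (x : Fin d → ℝ) : ℝ := (1 - eunorm x ^ 2) ^ μ

/-- The squared weighted `L²(W_μ, B^d)` norm `‖f‖²_{μ,2} = ∫_{B^d} f² W_μ`. -/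
def sqNormMu (d : ℕ) (μ : ℝ) (f : (Fin d → ℝ) → ℝ) : ℝ :=
  ∫ x in Bd d, (f x) ^ 2 * Wmu d μ x

/-- The weighted `L²(W_μ, B^d)` norm `‖f‖_{μ,2}`. -/
def normMu (d : ℕ) (μ : ℝ) (f : (Fin d → ℝ) → ℝ) : ℝ :=
  Real.sqrt (sqNormMu d μ f)

/-- `f ∈ 𝒱_n(W_μ, B^d)`: a polynomial of total degree at most `n`, orthogonal in
`L²(W_μ, B^d)` to every polynomial of total degree less than `n`. -/
def memV (d : ℕ) (μ : ℝ) (n : ℕ) (f : MvPolynomial (Fin d) ℝ) : Prop :=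
  f.totalDegree ≤ n ∧ ∀ g : MvPolynomial (Fin d) ℝ, g.totalDegree < n →
    ∫ x in Bd d, evalP f x * evalP g x * Wmu d μ x = 0

/-- The spectral operator `𝒟_μ` acting on polynomials. -/
def DmuP (d : ℕ) (μ : ℝ) (f : MvPolynomial (Fin d) ℝ) : MvPolynomial (Fin d) ℝ :=
  (∑ i, (1 - X i ^ 2) * pderiv i (pderiv i f))
    - 2 * (∑ i, ∑ j ∈ Finset.Ioi i, X i * X j * pderiv i (pderiv j f))
    - C ((d : ℝ) + 2 * μ + 1) * ∑ i, X i * pderiv i f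

/-- The partial derivative `∂_i` of a function on `ℝ^d`. -/
def pd {d : ℕ} (i : Fin d) (f : (Fin d → ℝ) → ℝ) (x : Fin d → ℝ) : ℝ :=
  fderiv ℝ f x (Pi.single i 1)

/-- `⟨x,∇⟩f(x) = Σ_i x_i ∂_i f(x)`. -/
def xgrad {d : ℕ} (f : (Fin d → ℝ) → ℝ) (x : Fin d → ℝ) : ℝ :=
  ∑ i, x i * pd i f x

/-- The angular derivative `D_{i,j} = x_i ∂_j − x_j ∂_i` acting on functions. -/
def DijF {d : ℕ} (i j : Fin d) (f : (Fin d → ℝ) → ℝ) (x : Fin d → ℝ) : ℝ :=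
  x i * pd j f x - x j * pd i f x

/-- The spectral operator `𝒟_μ` acting on functions. -/
def DmuF (d : ℕ) (μ : ℝ) (f : (Fin d → ℝ) → ℝ) (x : Fin d → ℝ) : ℝ :=
  (∑ i, (1 - x i ^ 2) * pd i (pd i f) x)
    - 2 * (∑ i, ∑ j ∈ Finset.Ioi i, x i * x j * pd i (pd j f) x)
    - ((d : ℝ) + 2 * μ + 1) * ∑ i, x i * pd i f x


/-! ### Algebra of the spectral operator -/

theorem pderiv_comm' {d : ℕ} (i j : Fin d) (f : MvPolynomial (Fin d) ℝ) :
    pderiv i (pderiv j f) = pderiv j (pderiv i f) := by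
  have h : ⁅(pderiv i : Derivation ℝ (MvPolynomial (Fin d) ℝ) (MvPolynomial (Fin d) ℝ)),
      (pderiv j : Derivation ℝ (MvPolynomial (Fin d) ℝ) (MvPolynomial (Fin d) ℝ))⁆ = 0 := by
    apply MvPolynomial.derivation_ext
    intro k
    rw [Derivation.commutator_apply]
    simp only [pderiv_X, Pi.single_apply, apply_ite, Derivation.map_one_eq_zero, map_zero]
    simp
  have := congrArg (fun D => D f) h
  simpa [Derivation.commutator_apply, sub_eq_zero] using this

/-- `𝒟_μ` as a linear endomorphism of the polynomial ring. -/
def Dlin (d : ℕ) (μ : ℝ) : MvPolynomial (Fin d) ℝ →ₗ[ℝ] MvPolynomial (Fin d) ℝ where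
  toFun := DmuP d μ
  map_add' f g := by
    simp only [DmuP, map_add, mul_add, Finset.sum_add_distrib]
    ring
  map_smul' c f := by
    simp only [DmuP, Derivation.map_smul, mul_smul_comm, ← Finset.smul_sum, ← smul_sub,
      RingHom.id_apply]

/-- The Laplacian on polynomials. -/
def lap {d : ℕ} (f : MvPolynomial (Fin d) ℝ) : MvPolynomial (Fin d) ℝ :=
  ∑ i, pderiv i (pderiv i f)

/-- The `k`-th eigenvalue of `-𝒟_μ`. -/
def lam (d : ℕ) (μ : ℝ) (k : ℕ) : ℝ := (k : ℝ) * ((k : ℝ) + 2 * μ + d)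

/-- Twice the sum over `i < j` plus the diagonal is the full double sum. -/
theorem sum_diag_add_two_mul {d : ℕ} (F : Fin d → Fin d → MvPolynomial (Fin d) ℝ)
    (hF : ∀ i j, F i j = F j i) :
    ∑ i, ∑ j, F i j = ∑ i, F i i + 2 * ∑ i, ∑ j ∈ Finset.Ioi i, F i j := by
  have h := Finset.sum_sum_Ioi_add_eq_sum_sum_off_diag F
  have h2 : ∑ i, ∑ j ∈ Finset.Ioi i, (F j i + F i j)
      = 2 * ∑ i, ∑ j ∈ Finset.Ioi i, F i j := by
    simp only [Finset.mul_sum]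
    refine Finset.sum_congr rfl fun i _ => Finset.sum_congr rfl fun j _ => ?_
    rw [hF j i]; ring
  rw [← h2, h, ← Finset.sum_add_distrib]
  refine Finset.sum_congr rfl fun i _ => ?_
  rw [← Finset.sum_add_sum_compl {i}, Finset.sum_singleton]
  exact congrArg _ (Finset.sum_congr rfl fun j _ => hF i j)

/-- By Euler's identity, `𝒟_μ = Δ - a (a + 2μ + d)` on forms of degree `a`. -/
theorem Dlin_homog {d : ℕ} (μ : ℝ) {a : ℕ} {f : MvPolynomial (Fin d) ℝ}
    (hf : f.IsHomogeneous a) : Dlin d μ f = lap f - lam d μ a • f := by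
  have hE := hf.sum_X_mul_pderiv
  have hEE : ∑ i, X i * pderiv i (∑ j, X j * pderiv j f)
      = ∑ j, X j * pderiv j f + ∑ i, ∑ j, X i * X j * pderiv i (pderiv j f) := by
    rw [← Finset.sum_add_distrib]
    refine Finset.sum_congr rfl fun i _ => ?_
    rw [map_sum, Finset.mul_sum]
    simp only [Derivation.leibniz, pderiv_X, smul_eq_mul, mul_add, Finset.sum_add_distrib]
    rw [add_comm]
    congr 1
    · rw [Finset.sum_eq_single i]
      · simp
      · intro j _ hj; simp [hj]
      · simp
    · refine Finset.sum_congr rfl fun j _ => ?_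
      ring
  have hS := sum_diag_add_two_mul (fun i j => X i * X j * pderiv i (pderiv j f))
    (fun i j => by rw [pderiv_comm' i j]; ring)
  rw [hE] at hEE
  have hE2 : ∑ i, X i * pderiv i (a • f) = a • (a • f) := by
    simp only [map_nsmul]
    simp only [mul_smul_comm, ← Finset.smul_sum, hE]
  rw [hE2, hS] at hEE
  change DmuP d μ f = _
  have hsplit : (∑ i, (1 - X i ^ 2) * pderiv i (pderiv i f))
      = lap f - ∑ i, X i * X i * pderiv i (pderiv i f) := by
    rw [lap, ← Finset.sum_sub_distrib]
    exact Finset.sum_congr rfl fun i _ => by ring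
  rw [DmuP, hsplit, hE]
  simp only [nsmul_eq_mul] at hEE ⊢
  have hC : lam d μ a • f = ((a : MvPolynomial (Fin d) ℝ) *
      ((a : MvPolynomial (Fin d) ℝ) + C ((d : ℝ) + 2 * μ + 1) - 1)) * f := by
    rw [MvPolynomial.smul_eq_C_mul, lam]
    congr 1
    simp only [map_mul, map_add, map_natCast, map_one]
    ring
  rw [hC]
  linear_combination hEE

theorem lap_isHomogeneous {d : ℕ} {a : ℕ} {f : MvPolynomial (Fin d) ℝ}
    (hf : f.IsHomogeneous a) : (lap f).IsHomogeneous (a - 2) := by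
  refine IsHomogeneous.sum _ _ _ fun i _ => ?_
  have := (hf.pderiv (i := i)).pderiv (i := i)
  rwa [Nat.sub_sub] at this

/-- `𝒟_μ + λ_{n+1}` lowers the degree of polynomials of degree at most `n + 1`. -/
theorem Dlin_add_totalDegree {d : ℕ} (μ : ℝ) {n : ℕ} {f : MvPolynomial (Fin d) ℝ}
    (hf : f.totalDegree ≤ n + 1) :
    (Dlin d μ f + lam d μ (n + 1) • f).totalDegree ≤ n := by
  have hsum : Dlin d μ f + lam d μ (n + 1) • f = ∑ a ∈ Finset.range (f.totalDegree + 1),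
      (lap (homogeneousComponent a f)
        + (lam d μ (n + 1) - lam d μ a) • homogeneousComponent a f) := by
    conv_lhs => rw [← sum_homogeneousComponent f]
    rw [map_sum, Finset.smul_sum, ← Finset.sum_add_distrib]
    refine Finset.sum_congr rfl fun a _ => ?_
    rw [Dlin_homog μ (homogeneousComponent_isHomogeneous a f), sub_smul]
    abel
  rw [hsum]
  refine totalDegree_finsetSum_le fun a ha => ?_
  have ha' : a ≤ n + 1 := by
    have := Finset.mem_range.1 ha
    omega
  have hh := homogeneousComponent_isHomogeneous a f
  refine (totalDegree_add _ _).trans (max_le ?_ ?_)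
  · exact (lap_isHomogeneous hh).totalDegree_le.trans (by omega)
  · rcases Nat.lt_or_ge a (n + 1) with h | h
    · exact (totalDegree_smul_le _ _).trans (hh.totalDegree_le.trans (by omega))
    · have : a = n + 1 := by omega
      subst this
      simp

theorem lam_strictMono (d : ℕ) (hd : 1 ≤ d) (μ : ℝ) (hμ : -1 < μ) : StrictMono (lam d μ) := by
  refine strictMono_nat_of_lt_succ fun k => ?_
  have h1 : (1 : ℝ) ≤ d := by exact_mod_cast hd
  have h2 : (0 : ℝ) ≤ k := Nat.cast_nonneg k
  simp only [lam]
  push_cast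
  nlinarith

/-- Every polynomial of degree at most `n` is a sum of eigenvectors of `𝒟_μ` with eigenvalues
`-λ_0, …, -λ_n`. Inductively, `(𝒟_μ + λ_{n+1}) f` has such a decomposition `∑ h_k` of degree `n`,
and `f - ∑ h_k / (λ_{n+1} - λ_k)` is annihilated by `𝒟_μ + λ_{n+1}`. -/
theorem exists_eigen_decomp (d : ℕ) (hd : 1 ≤ d) (μ : ℝ) (hμ : -1 < μ) (n : ℕ) :
    ∀ f : MvPolynomial (Fin d) ℝ, f.totalDegree ≤ n →
      ∃ g : ℕ → MvPolynomial (Fin d) ℝ, (∀ k, Dlin d μ (g k) = -lam d μ k • g k) ∧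
        f = ∑ k ∈ Finset.range (n + 1), g k := by
  induction n with
  | zero =>
    intro f hf
    refine ⟨fun k => if k = 0 then f else 0, fun k => ?_, by simp⟩
    by_cases hk : k = 0
    · subst hk
      have hh : f.IsHomogeneous 0 := by
        rw [← totalDegree_zero_iff_isHomogeneous]
        omega
      have hf0 : f = C (coeff 0 f) := totalDegree_eq_zero_iff_eq_C.1 (by omega)
      have hl : lap f = 0 := by
        rw [hf0, lap]; simp
      simp only [if_true]
      rw [Dlin_homog μ hh, hl, zero_sub, neg_smul]
    · simp [hk]
  | succ n ih =>
    intro f hf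
    obtain ⟨h, hh, hsum⟩ := ih _ (Dlin_add_totalDegree μ hf)
    set g : ℕ → MvPolynomial (Fin d) ℝ := fun k => (lam d μ (n + 1) - lam d μ k)⁻¹ • h k with hg
    have hgD : ∀ k, Dlin d μ (g k) = -lam d μ k • g k := fun k => by
      rw [hg]; simp only [map_smul, hh]; rw [smul_comm]
    have hgh : ∀ k ∈ Finset.range (n + 1),
        Dlin d μ (g k) + lam d μ (n + 1) • g k = h k := fun k hk => by
      have hne : lam d μ (n + 1) - lam d μ k ≠ 0 :=
        sub_ne_zero.2 (lam_strictMono d hd μ hμ (Finset.mem_range.1 hk)).ne'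
      rw [hgD, ← add_smul, hg, smul_smul]
      rw [show (-lam d μ k + lam d μ (n + 1)) * (lam d μ (n + 1) - lam d μ k)⁻¹ = 1 by
        rw [neg_add_eq_sub]; exact mul_inv_cancel₀ hne, one_smul]
    refine ⟨fun k => if k = n + 1 then f - ∑ k ∈ Finset.range (n + 1), g k else g k,
      fun k => ?_, ?_⟩
    · by_cases hk : k = n + 1
      · subst hk
        simp only [if_true]
        have key : ∑ k ∈ Finset.range (n + 1), Dlin d μ (g k)
            + lam d μ (n + 1) • ∑ k ∈ Finset.range (n + 1), g k
            = Dlin d μ f + lam d μ (n + 1) • f := by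
          rw [hsum, Finset.smul_sum, ← Finset.sum_add_distrib]
          exact Finset.sum_congr rfl hgh
        rw [map_sub, map_sum, neg_smul, smul_sub]
        rw [← sub_eq_zero] at key ⊢
        rw [← neg_eq_zero, ← key]
        abel
      · simp only [hk, if_false, hgD]
    · rw [Finset.sum_range_succ, if_pos rfl]
      rw [Finset.sum_congr rfl (g := g)]
      · abel
      · intro k hk
        rw [if_neg (Finset.mem_range.1 hk).ne]

/-! ### The Gaussian functional -/

/-- The squared Euclidean norm. -/
def rho {d : ℕ} (x : Fin d → ℝ) : ℝ := ∑ i, x i ^ 2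

theorem rho_nonneg {d : ℕ} (x : Fin d → ℝ) : 0 ≤ rho x :=
  Finset.sum_nonneg fun i _ => sq_nonneg (x i)

theorem continuous_rho {d : ℕ} : Continuous (rho : (Fin d → ℝ) → ℝ) := by
  unfold rho; fun_prop

theorem continuous_evalP {d : ℕ} (f : MvPolynomial (Fin d) ℝ) : Continuous (evalP f) :=
  MvPolynomial.continuous_eval f

theorem integrable_gauss {d : ℕ} (f : MvPolynomial (Fin d) ℝ) :
    Integrable (fun x => evalP f x * Real.exp (-rho x)) := by
  induction f using MvPolynomial.induction_on' with
  | monomial s c =>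
    have h1 : ∀ k : ℕ, Integrable (fun t : ℝ => t ^ k * Real.exp (-t ^ 2)) := fun k => by
      have := integrable_rpow_mul_exp_neg_mul_sq (b := 1) one_pos (s := k)
        (by have : (0 : ℝ) ≤ k := Nat.cast_nonneg k
            linarith)
      simpa using this
    have h2 := (Integrable.fintype_prod (μ := fun _ : Fin d => (volume : Measure ℝ))
      (f := fun i t => t ^ s i * Real.exp (-t ^ 2)) fun i => h1 (s i)).const_mul c
    rw [← volume_pi] at h2
    refine h2.congr (Filter.Eventually.of_forall fun x => ?_)
    simp only [evalP, eval_monomial, rho, Finset.prod_mul_distrib, ← Real.exp_sum,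
      Finset.sum_neg_distrib]
    rw [Finsupp.prod_fintype _ _ (by simp)]
    ring
  | add p q hp hq =>
    refine (hp.add hq).congr (Filter.Eventually.of_forall fun x => ?_)
    simp only [evalP, map_add, Pi.add_apply]
    ring

/-- The Gaussian functional `f ↦ ∫ f e^{-‖x‖²}`. -/
def Glin (d : ℕ) : MvPolynomial (Fin d) ℝ →ₗ[ℝ] ℝ where
  toFun f := ∫ x, evalP f x * Real.exp (-rho x)
  map_add' f g := by
    rw [← integral_add (integrable_gauss f) (integrable_gauss g)]
    simp only [evalP, map_add, add_mul]
  map_smul' c f := by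
    rw [RingHom.id_apply, smul_eq_mul, ← integral_const_mul]
    simp only [evalP, smul_eval, mul_assoc]

theorem hasFDerivAt_evalP {d : ℕ} (f : MvPolynomial (Fin d) ℝ) (x : Fin d → ℝ) :
    HasFDerivAt (evalP f)
      (∑ i, evalP (pderiv i f) x • (ContinuousLinearMap.proj i : (Fin d → ℝ) →L[ℝ] ℝ)) x := by
  induction f using MvPolynomial.induction_on with
  | C a =>
    have : evalP (C a : MvPolynomial (Fin d) ℝ) = fun _ => a := by
      funext y; simp [evalP]
    rw [this]
    simpa [evalP] using hasFDerivAt_const a x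
  | add p q hp hq =>
    have : evalP (p + q) = evalP p + evalP q := by
      funext y; simp [evalP]
    rw [this]
    refine (hp.add hq).congr_fderiv ?_
    simp [evalP, add_smul, Finset.sum_add_distrib]
  | mul_X p j hp =>
    have : evalP (p * X j) = fun y => evalP p y * y j := by
      funext y; simp [evalP]
    rw [this]
    refine (hp.mul (hasFDerivAt_apply j x)).congr_fderiv ?_
    ext v
    simp only [evalP, Derivation.leibniz, pderiv_X, smul_eq_mul, map_add, map_mul, eval_X,
      add_smul, Finset.sum_add_distrib, _root_.add_apply,
      _root_.smul_apply, _root_.sum_apply, ContinuousLinearMap.proj_apply]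
    congr 1
    · rw [Finset.sum_eq_single j]
      · simp
      · intro i _ hi; simp [Ne.symm hi]
      · simp
    · rw [Finset.mul_sum]
      exact Finset.sum_congr rfl fun i _ => by ring

/-- Integration by parts against the Gaussian weight. -/
theorem Glin_pderiv {d : ℕ} (i : Fin d) (f : MvPolynomial (Fin d) ℝ) :
    Glin d (pderiv i f) = 2 * Glin d (X i * f) := by
  have hr : ∀ x : Fin d → ℝ, HasFDerivAt (fun y => Real.exp (-rho y))
      (Real.exp (-rho x) • -(∑ j, (2 * x j) •
        (ContinuousLinearMap.proj j : (Fin d → ℝ) →L[ℝ] ℝ))) x := fun x => by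
    refine HasFDerivAt.exp (HasFDerivAt.neg ?_)
    unfold rho
    refine HasFDerivAt.fun_sum fun j _ => ?_
    simpa using (hasFDerivAt_apply (𝕜 := ℝ) j x).pow 2
  have hf' : ∀ x, fderiv ℝ (evalP f) x (Pi.single i 1) = evalP (pderiv i f) x := fun x => by
    rw [(hasFDerivAt_evalP f x).fderiv]
    simp [Pi.single_apply]
  have hg' : ∀ x, fderiv ℝ (fun y : Fin d → ℝ => Real.exp (-rho y)) x (Pi.single i 1)
      = -2 * x i * Real.exp (-rho x) := fun x => by
    rw [(hr x).fderiv]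
    simp [Pi.single_apply]
    ring
  have hX := integrable_gauss (X i * f)
  have e : ∀ x : Fin d → ℝ, evalP f x * (-2 * x i * Real.exp (-rho x))
      = -2 * (evalP (X i * f) x * Real.exp (-rho x)) := fun x => by
    simp only [evalP, map_mul, eval_X]; ring
  have key := integral_mul_fderiv_eq_neg_fderiv_mul_of_integrable (μ := volume)
    (f := evalP f) (g := fun y => Real.exp (-rho y)) (v := Pi.single i 1)
    (by simp only [hf']; exact integrable_gauss _)
    (by simp only [hg', e]; exact hX.const_mul _)
    (integrable_gauss f)
    (fun x _ => (hasFDerivAt_evalP f x).differentiableAt)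
    (fun x _ => (hr x).differentiableAt)
  simp only [hg', hf', e, integral_const_mul] at key
  change ∫ x, _ = 2 * ∫ x, _
  linarith

/-- Green's identity for the Gaussian weight. -/
theorem Glin_green {d : ℕ} {a : ℕ} {f : MvPolynomial (Fin d) ℝ} (hf : f.IsHomogeneous a)
    (g : MvPolynomial (Fin d) ℝ) :
    Glin d (g * lap f) = 2 * a * Glin d (f * g) - Glin d (∑ i, pderiv i f * pderiv i g) := by
  have h1 : ∀ i, Glin d (g * pderiv i (pderiv i f))
      = 2 * Glin d (g * (X i * pderiv i f)) - Glin d (pderiv i f * pderiv i g) := fun i => by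
    have := Glin_pderiv i (g * pderiv i f)
    rw [Derivation.leibniz, map_add, smul_eq_mul, smul_eq_mul, mul_left_comm] at this
    linarith
  rw [lap, Finset.mul_sum, map_sum, Finset.sum_congr rfl fun i _ => h1 i,
    Finset.sum_sub_distrib, ← Finset.mul_sum, ← map_sum, ← map_sum, ← Finset.mul_sum,
    hf.sum_X_mul_pderiv, mul_smul_comm, map_nsmul,
    nsmul_eq_mul, mul_comm g f]
  ring

/-! ### Reduction of the ball functional to the Gaussian functional -/

/-- The Gamma density `e^{-t} t^μ`, extended by zero to `t < 0`. The endpoint `t = 0` is kept so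
that `gam μ (1 - ‖x‖²)` is supported on the closed ball. -/
def gam (μ : ℝ) : ℝ → ℝ := Set.indicator (Set.Ici 0) fun t => Real.exp (-t) * t ^ μ

theorem gam_nonneg (μ t : ℝ) : 0 ≤ gam μ t :=
  Set.indicator_nonneg (fun _ ht => mul_nonneg (Real.exp_pos _).le (Real.rpow_nonneg ht _)) t

theorem measurable_gam (μ : ℝ) : Measurable (gam μ) := by
  unfold gam
  refine Measurable.indicator ?_ measurableSet_Ici
  fun_prop

theorem integrable_gam {μ : ℝ} (hμ : -1 < μ) : Integrable (gam μ) := by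
  unfold gam
  rw [integrable_indicator_iff measurableSet_Ici, integrableOn_Ici_iff_integrableOn_Ioi]
  simpa using Real.GammaIntegral_convergent (s := μ + 1) (by linarith)

theorem integral_gam {μ : ℝ} (hμ : -1 < μ) : ∫ t, gam μ t = Real.Gamma (μ + 1) := by
  unfold gam
  rw [integral_indicator measurableSet_Ici, integral_Ici_eq_integral_Ioi,
    Real.Gamma_eq_integral (by linarith)]
  simp

theorem Wmu_eq {d : ℕ} (μ : ℝ) (x : Fin d → ℝ) : Wmu d μ x = (1 - rho x) ^ μ := by
  change (1 - Real.sqrt (rho x) ^ 2) ^ μ = _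
  rw [Real.sq_sqrt (rho_nonneg x)]

theorem mem_Bd {d : ℕ} (x : Fin d → ℝ) : x ∈ Bd d ↔ rho x ≤ 1 := by
  change Real.sqrt (rho x) ≤ 1 ↔ _
  rw [Real.sqrt_le_one]

theorem measurableSet_Bd (d : ℕ) : MeasurableSet (Bd d) := by
  have : Bd d = rho ⁻¹' Set.Iic 1 := by ext x; exact mem_Bd x
  rw [this]
  exact continuous_rho.measurable measurableSet_Iic

/-- Integrand on `ℝ^d × ℝ`; integrating out `s` gives the Gaussian weight, integrating out `y`
gives the ball weight, by rescaling. -/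
def kern {d : ℕ} (μ : ℝ) (f : MvPolynomial (Fin d) ℝ) (y : Fin d → ℝ) (s : ℝ) : ℝ :=
  evalP f y * Real.exp (-rho y) * gam μ (s - rho y)

theorem integrable_kern {d : ℕ} {μ : ℝ} (hμ : -1 < μ) (f : MvPolynomial (Fin d) ℝ) :
    Integrable (Function.uncurry (kern μ f)) ((volume : Measure (Fin d → ℝ)).prod volume) := by
  have hm : Measurable (Function.uncurry (kern μ f)) := by
    have h1 := (continuous_evalP f).measurable
    have h2 := (continuous_rho (d := d)).measurable
    have h3 := measurable_gam μ
    unfold kern Function.uncurry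
    fun_prop
  rw [integrable_prod_iff hm.aestronglyMeasurable]
  refine ⟨Filter.Eventually.of_forall fun y => ?_, ?_⟩
  · exact ((integrable_gam hμ).comp_sub_right (rho y)).const_mul
      (evalP f y * Real.exp (-rho y))
  · have : ∀ y, ∫ s, ‖Function.uncurry (kern μ f) (y, s)‖
        = ‖evalP f y * Real.exp (-rho y)‖ * Real.Gamma (μ + 1) := fun y => by
      simp only [Function.uncurry, kern, norm_mul (_ * _), Real.norm_of_nonneg (gam_nonneg μ _)]
      rw [integral_const_mul, integral_sub_right_eq_self, integral_gam hμ]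
    simp only [this]
    exact (integrable_gauss f).norm.mul_const _

/-- The integrand of the ball functional, extended by zero. -/
def ballFn {d : ℕ} (μ : ℝ) (f : MvPolynomial (Fin d) ℝ) : (Fin d → ℝ) → ℝ :=
  Set.indicator (Bd d) fun x => evalP f x * Wmu d μ x

theorem evalP_smul {d a : ℕ} {f : MvPolynomial (Fin d) ℝ} (hf : f.IsHomogeneous a) (r : ℝ)
    (x : Fin d → ℝ) : evalP f (r • x) = r ^ a * evalP f x := by
  simp only [evalP, eval_eq, Finset.mul_sum]
  refine Finset.sum_congr rfl fun m hm => ?_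
  have hdeg : ∑ i ∈ m.support, m i = a :=
    (hf.degree_eq_sum_deg_support hm).symm
  simp only [Pi.smul_apply, smul_eq_mul, mul_pow, Finset.prod_mul_distrib,
    Finset.prod_pow_eq_pow_sum, hdeg]
  ring

theorem kern_scale {d a : ℕ} (μ : ℝ) {f : MvPolynomial (Fin d) ℝ} (hf : f.IsHomogeneous a)
    {s : ℝ} (hs : 0 < s) (x : Fin d → ℝ) :
    kern μ f (Real.sqrt s • x) s = Real.exp (-s) * s ^ ((a : ℝ) / 2 + μ) * ballFn μ f x := by
  have hr : rho (Real.sqrt s • x) = s * rho x := by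
    simp only [rho, Pi.smul_apply, smul_eq_mul, mul_pow, Real.sq_sqrt hs.le, Finset.mul_sum]
  have hsa : Real.sqrt s ^ a = s ^ ((a : ℝ) / 2) := by
    rw [Real.sqrt_eq_rpow, ← Real.rpow_natCast, ← Real.rpow_mul hs.le]
    congr 1; ring
  rw [kern, hr, evalP_smul hf, ballFn, gam, hsa]
  have hfac : s - s * rho x = s * (1 - rho x) := by ring
  by_cases hx : rho x ≤ 1
  · have h1 : 0 ≤ 1 - rho x := by linarith
    rw [Set.indicator_of_mem ((mem_Bd x).2 hx), hfac,
      Set.indicator_of_mem (Set.mem_Ici.2 (mul_nonneg hs.le h1)), Wmu_eq,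
      Real.mul_rpow hs.le h1, Real.rpow_add hs]
    have he : Real.exp (-(s * rho x)) * Real.exp (-(s * (1 - rho x))) = Real.exp (-s) := by
      rw [← Real.exp_add]; congr 1; ring
    rw [← he]; ring
  · rw [Set.indicator_of_notMem (s := Bd d) (by rwa [mem_Bd]), Set.indicator_of_notMem]
    · simp
    · rw [Set.mem_Ici, hfac, not_le]
      exact mul_neg_of_pos_of_neg hs (by linarith [not_le.1 hx])

theorem kern_of_neg {d : ℕ} (μ : ℝ) (f : MvPolynomial (Fin d) ℝ) {s : ℝ} (hs : s < 0)
    (y : Fin d → ℝ) : kern μ f y s = 0 := by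
  rw [kern, gam, Set.indicator_of_notMem, mul_zero]
  rw [Set.mem_Ici, not_le]
  linarith [rho_nonneg y]

theorem integrable_ballFn_homog {d a : ℕ} {μ : ℝ} (hμ : -1 < μ) {f : MvPolynomial (Fin d) ℝ}
    (hf : f.IsHomogeneous a) : Integrable (ballFn μ f) := by
  have h := (integrable_kern hμ f).prod_left_ae
  -- almost every slice is integrable, so some slice with `s > 0` is
  obtain ⟨s, hs, hs0⟩ : ∃ s, Integrable (fun y => kern μ f y s) ∧ 0 < s := by
    by_contra hcon
    push Not at hcon
    have h0 : ∀ᵐ s : ℝ, s ∉ Set.Ioi (0 : ℝ) := by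
      filter_upwards [h] with s hs
      exact not_lt.2 (hcon s hs)
    have := measure_eq_zero_iff_ae_notMem.2 h0
    simp at this
  have hr : Real.sqrt s ≠ 0 := (Real.sqrt_pos.2 hs0).ne'
  have h2 := (integrable_comp_smul_iff volume (fun y => kern μ f y s) hr).2 hs
  simp only [kern_scale μ hf hs0] at h2
  have hc : Real.exp (-s) * s ^ ((a : ℝ) / 2 + μ) ≠ 0 :=
    (mul_pos (Real.exp_pos _) (Real.rpow_pos_of_pos hs0 _)).ne'
  exact (integrable_const_mul_iff (Ne.isUnit hc) _).1 h2

theorem integrable_ballFn {d : ℕ} {μ : ℝ} (hμ : -1 < μ) (f : MvPolynomial (Fin d) ℝ) :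
    Integrable (ballFn μ f) := by
  have h : ballFn μ f = fun x => ∑ a ∈ Finset.range (f.totalDegree + 1),
      ballFn μ (homogeneousComponent a f) x := by
    funext x
    simp only [ballFn]
    by_cases hx : x ∈ Bd d
    · simp only [Set.indicator_of_mem hx, evalP, ← Finset.sum_mul, ← map_sum,
        sum_homogeneousComponent]
    · simp only [Set.indicator_of_notMem hx, Finset.sum_const_zero]
  rw [h]
  exact integrable_finsetSum _ fun a _ =>
    integrable_ballFn_homog hμ (homogeneousComponent_isHomogeneous a f)

/-- The ball functional `f ↦ ∫_{B^d} f W_μ`. -/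
def Llin (d : ℕ) (μ : ℝ) (hμ : -1 < μ) : MvPolynomial (Fin d) ℝ →ₗ[ℝ] ℝ where
  toFun f := ∫ x, ballFn μ f x
  map_add' f g := by
    rw [← integral_add (integrable_ballFn hμ f) (integrable_ballFn hμ g)]
    congr 1; funext x
    by_cases hx : x ∈ Bd d <;> simp [ballFn, hx, evalP, add_mul]
  map_smul' c f := by
    rw [RingHom.id_apply, smul_eq_mul, ← integral_const_mul]
    congr 1; funext x
    by_cases hx : x ∈ Bd d <;> simp [ballFn, hx, evalP, mul_assoc]

/-- For a form of degree `a`, the ball functional is a constant multiple of the Gaussian one: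
integrate `kern` in both orders. -/
theorem Llin_homog {d a : ℕ} {μ : ℝ} (hμ : -1 < μ) {f : MvPolynomial (Fin d) ℝ}
    (hf : f.IsHomogeneous a) :
    Real.Gamma (μ + 1 + ((a : ℝ) + d) / 2) * Llin d μ hμ f
      = Real.Gamma (μ + 1) * Glin d f := by
  have hsw := integral_integral_swap (integrable_kern hμ f)
  have hleft : ∀ y, ∫ s, kern μ f y s
      = Real.Gamma (μ + 1) * (evalP f y * Real.exp (-rho y)) := fun y => by
    simp only [kern]
    rw [integral_const_mul, integral_sub_right_eq_self, integral_gam hμ, mul_comm]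
  have hright : ∀ s ≠ 0, ∫ y, kern μ f y s
      = Set.indicator (Set.Ioi 0) (fun s => Real.exp (-s) *
        s ^ (μ + 1 + ((a : ℝ) + d) / 2 - 1) * Llin d μ hμ f) s := fun s hs => by
    rcases hs.lt_or_gt with hs | hs
    · simp [kern_of_neg μ f hs, not_lt.2 hs.le]
    · have h := Measure.integral_comp_smul volume (fun y => kern μ f y s) (Real.sqrt s)
      simp only [kern_scale μ hf hs, integral_const_mul] at h
      have hp : 0 < Real.sqrt s ^ d := pow_pos (Real.sqrt_pos.2 hs) d
      rw [Module.finrank_fin_fun, abs_of_pos (inv_pos.2 hp), smul_eq_mul,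
        eq_inv_mul_iff_mul_eq₀ hp.ne'] at h
      rw [← h, Set.indicator_of_mem (Set.mem_Ioi.2 hs)]
      have hsd : Real.sqrt s ^ d = s ^ ((d : ℝ) / 2) := by
        rw [Real.sqrt_eq_rpow, ← Real.rpow_natCast, ← Real.rpow_mul hs.le]
        congr 1; ring
      rw [hsd, show μ + 1 + ((a : ℝ) + d) / 2 - 1 = (d : ℝ) / 2 + ((a : ℝ) / 2 + μ) by ring,
        Real.rpow_add hs ((d : ℝ) / 2)]
      change _ = _ * ∫ x, ballFn μ f x
      ring
  have hae : (fun s => ∫ y, kern μ f y s) =ᵐ[volume]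
      Set.indicator (Set.Ioi 0) (fun s => Real.exp (-s) *
        s ^ (μ + 1 + ((a : ℝ) + d) / 2 - 1) * Llin d μ hμ f) := by
    filter_upwards [Measure.ae_ne volume (0 : ℝ)] with s hs using hright s hs
  rw [integral_congr_ae hae, integral_indicator measurableSet_Ioi, integral_mul_const,
    ← Real.Gamma_eq_integral] at hsw
  · rw [← hsw]
    simp only [hleft, integral_const_mul]
    rfl
  · have : (0 : ℝ) ≤ ((a : ℝ) + d) / 2 := by positivity
    linarith

/-! ### Symmetry of the spectral operator and the norm bound -/

theorem Llin_symm_homog {d a b : ℕ} {μ : ℝ} (hμ : -1 < μ) {f g : MvPolynomial (Fin d) ℝ}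
    (hf : f.IsHomogeneous a) (hg : g.IsHomogeneous b) :
    Llin d μ hμ (g * Dlin d μ f) = Llin d μ hμ (f * Dlin d μ g) := by
  set S : ℝ := μ + ((a : ℝ) + b + d) / 2 with hS
  -- `Γ(S + 1) L(h) = S Γ(μ + 1) G(h)` for forms `h = g Δf`, of degree `a + b - 2`
  have key : ∀ {a b : ℕ} {f g : MvPolynomial (Fin d) ℝ}, f.IsHomogeneous a → g.IsHomogeneous b →
      μ + ((a : ℝ) + b + d) / 2 = S →
      Real.Gamma (S + 1) * Llin d μ hμ (g * lap f) =
        S * (Real.Gamma (μ + 1) * Glin d (g * lap f)) := by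
    intro a b f g hf hg hab
    rcases Nat.lt_or_ge a 2 with ha | ha
    · have hl : lap f = 0 := by
        have h0 : ∀ i, (pderiv i f).IsHomogeneous 0 := fun i => by
          have := hf.pderiv (i := i)
          rwa [show a - 1 = 0 by omega] at this
        refine Finset.sum_eq_zero fun i _ => ?_
        rw [totalDegree_eq_zero_iff_eq_C.1
          (Nat.le_zero.1 (h0 i).totalDegree_le), pderiv_C]
      simp [hl]
    · obtain ⟨c, rfl⟩ := Nat.exists_eq_add_of_le ha
      have hh := hg.mul (lap_isHomogeneous hf)
      have h := Llin_homog hμ hh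
      have hSe : μ + 1 + (((b + (2 + c - 2) : ℕ) : ℝ) + d) / 2 = S := by
        rw [← hab]
        simp only [Nat.add_sub_cancel_left]
        push_cast; ring
      rw [hSe] at h
      have hS0 : S ≠ 0 := by
        rw [← hSe]
        have : (0 : ℝ) ≤ (((b + (2 + c - 2) : ℕ) : ℝ) + d) / 2 := by positivity
        linarith
      rw [Real.Gamma_add_one hS0, mul_assoc, h]
  have k1 := key hf hg rfl
  have k2 := key hg hf (by rw [hS]; ring)
  have k3 := Llin_homog hμ (hf.mul hg)
  rw [show μ + 1 + (((a + b : ℕ) : ℝ) + d) / 2 = S + 1 by rw [hS]; push_cast; ring] at k3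
  have g1 := Glin_green hf g
  have g2 := Glin_green hg f
  have hsum : ∑ i, pderiv i g * pderiv i f = ∑ i, pderiv i f * pderiv i g :=
    Finset.sum_congr rfl fun i _ => mul_comm _ _
  rw [hsum, mul_comm g f] at g2
  have hpos : 0 < Real.Gamma (S + 1) := by
    refine Real.Gamma_pos_of_pos ?_
    have : (0 : ℝ) ≤ ((a : ℝ) + b + d) / 2 := by positivity
    rw [hS]; linarith
  have hlam : lam d μ a - lam d μ b = 2 * S * (a - b) := by
    rw [lam, lam, hS]; ring
  refine mul_left_cancel₀ hpos.ne' ?_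
  rw [Dlin_homog μ hf, Dlin_homog μ hg, mul_sub, mul_sub, mul_smul_comm, mul_smul_comm,
    map_sub, map_sub, map_smul, map_smul, mul_comm g f, smul_eq_mul, smul_eq_mul, mul_sub, mul_sub,
    k1, k2, g1, g2]
  linear_combination (lam d μ b - lam d μ a) * k3 - Real.Gamma (μ + 1) * Glin d (f * g) * hlam

theorem Llin_symm {d : ℕ} {μ : ℝ} (hμ : -1 < μ) (f g : MvPolynomial (Fin d) ℝ) :
    Llin d μ hμ (g * Dlin d μ f) = Llin d μ hμ (f * Dlin d μ g) := by
  rw [← sum_homogeneousComponent f, ← sum_homogeneousComponent g]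
  simp only [map_sum, Finset.sum_mul, Finset.mul_sum]
  rw [Finset.sum_comm]
  exact Finset.sum_congr rfl fun a _ => Finset.sum_congr rfl fun b _ =>
    Llin_symm_homog hμ (homogeneousComponent_isHomogeneous _ f)
      (homogeneousComponent_isHomogeneous _ g)

theorem sqNormMu_eq {d : ℕ} {μ : ℝ} (hμ : -1 < μ) (f : MvPolynomial (Fin d) ℝ) :
    sqNormMu d μ (evalP f) = Llin d μ hμ (f * f) := by
  change _ = ∫ x, ballFn μ (f * f) x
  unfold ballFn
  rw [integral_indicator (measurableSet_Bd d), sqNormMu]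
  simp only [evalP, map_mul, sq]

theorem sqNormMu_nonneg {d : ℕ} (μ : ℝ) (f : (Fin d → ℝ) → ℝ) : 0 ≤ sqNormMu d μ f := by
  refine setIntegral_nonneg (measurableSet_Bd d) fun x hx => mul_nonneg (sq_nonneg _) ?_
  rw [Wmu_eq]
  exact Real.rpow_nonneg (by linarith [(mem_Bd x).1 hx]) _

/-- Parseval: eigenvectors for distinct eigenvalues are orthogonal. -/
theorem Llin_parseval {d : ℕ} (hd : 1 ≤ d) {μ : ℝ} (hμ : -1 < μ) {g : ℕ → MvPolynomial (Fin d) ℝ}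
    (hg : ∀ k, Dlin d μ (g k) = -lam d μ k • g k) (c : ℕ → ℝ) (m : ℕ) :
    Llin d μ hμ ((∑ k ∈ Finset.range m, c k • g k) * ∑ k ∈ Finset.range m, c k • g k)
      = ∑ k ∈ Finset.range m, c k ^ 2 * Llin d μ hμ (g k * g k) := by
  have horth : ∀ j k, j ≠ k → Llin d μ hμ (g j * g k) = 0 := fun j k hjk => by
    have h := Llin_symm hμ (g j) (g k)
    rw [hg, hg, mul_smul_comm, mul_smul_comm, map_smul, map_smul, mul_comm (g k),
      smul_eq_mul, smul_eq_mul] at h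
    have hne : lam d μ j - lam d μ k ≠ 0 :=
      sub_ne_zero.2 ((lam_strictMono d hd μ hμ).injective.ne hjk)
    have h' : (lam d μ j - lam d μ k) * Llin d μ hμ (g j * g k) = 0 := by linarith
    exact (mul_eq_zero.1 h').resolve_left hne
  rw [Finset.sum_mul_sum, map_sum]
  refine Finset.sum_congr rfl fun j hj => ?_
  rw [map_sum, Finset.sum_eq_single_of_mem j hj]
  · rw [smul_mul_smul_comm, map_smul, smul_eq_mul, sq]
  · intro k _ hk
    rw [smul_mul_smul_comm, map_smul, horth j k hk.symm, smul_zero]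

/-- for a polynomial `f` of degree at most `n`,
`‖𝒟_μ f‖_{μ,2} ≤ n(n+2μ+d) ‖f‖_{μ,2}`. -/
theorem stmt13 (d : ℕ) (hd : 1 ≤ d) (μ : ℝ) (hμ : -1 < μ) (n : ℕ)
    (f : MvPolynomial (Fin d) ℝ) (hf : f.totalDegree ≤ n) :
    normMu d μ (evalP (DmuP d μ f))
      ≤ (n : ℝ) * ((n : ℝ) + 2 * μ + d) * normMu d μ (evalP f) := by
  have hmono := (lam_strictMono d hd μ hμ).monotone
  have hnn : ∀ k, 0 ≤ lam d μ k := fun k => by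
    have := hmono (Nat.zero_le k)
    simpa [lam] using this
  obtain ⟨g, hg, hsum⟩ := exists_eigen_decomp d hd μ hμ n f hf
  have hDf : DmuP d μ f = ∑ k ∈ Finset.range (n + 1), (-lam d μ k) • g k := by
    change Dlin d μ f = _
    rw [hsum, map_sum]
    exact Finset.sum_congr rfl fun k _ => hg k
  have h1 : sqNormMu d μ (evalP f)
      = ∑ k ∈ Finset.range (n + 1), Llin d μ hμ (g k * g k) := by
    have := Llin_parseval hd hμ hg (fun _ => 1) (n + 1)
    simp only [one_smul, one_pow, one_mul, ← hsum] at this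
    rw [sqNormMu_eq hμ, this]
  have h2 : sqNormMu d μ (evalP (DmuP d μ f))
      = ∑ k ∈ Finset.range (n + 1), (-lam d μ k) ^ 2 * Llin d μ hμ (g k * g k) := by
    rw [sqNormMu_eq hμ, hDf, Llin_parseval hd hμ hg (fun k => -lam d μ k)]
  have h3 : sqNormMu d μ (evalP (DmuP d μ f)) ≤ lam d μ n ^ 2 * sqNormMu d μ (evalP f) := by
    rw [h1, h2, Finset.mul_sum]
    refine Finset.sum_le_sum fun k hk => ?_
    have hpos : 0 ≤ Llin d μ hμ (g k * g k) := by
      rw [← sqNormMu_eq hμ]; exact sqNormMu_nonneg μ _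
    rw [neg_sq]
    have hk' : lam d μ k ≤ lam d μ n := hmono (Nat.lt_succ_iff.1 (Finset.mem_range.1 hk))
    exact mul_le_mul_of_nonneg_right (pow_le_pow_left₀ (hnn k) hk' 2) hpos
  change Real.sqrt _ ≤ lam d μ n * Real.sqrt _
  refine (Real.sqrt_le_sqrt h3).trans_eq ?_
  rw [Real.sqrt_mul (sq_nonneg _), Real.sqrt_sq (hnn n)]

end
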